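/- Let M > 0 and consider P(Z; M, β) = (Z−1)³·(Z²+3Z+6)/60 + (M/9)·(5Z²−16Z+20) + (β/2)·(Z−1)² as a polynomial in Z ∈ ℝ with parameter β ∈ ℝ. Then there exists β*(M) < 0 such that: (i) if β > β*(M), then P(Z; M, β) > 0 for all Z ≥ 1; (ii) if β < β*(M), then there exists a unique Z_r > 1 such that P(Z; M, β) > 0 for 1 ≤ Z < Z_r, P(Z_r; M, β) = 0, and ∂P/∂Z(Z_r; M, β) < 0; (iii) if β = β*(M), then there exists Z*(M) > 1 such that P(Z*(M); M, β) = 0 and ∂P/∂Z(Z*(M); M, β) = 0 (a double zero), and P(Z; M, β) > 0 for all Z ≥ 1 with Z ≠ Z*(M). -/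

import Mathlib

/-- The fifth-order polynomial `P(Z; M, β)` solving `P''' = Z²` with `P(1; M, β) = M`. -/
noncomputable def P (M β Z : ℝ) : ℝ :=
  (Z - 1) ^ 3 * (Z ^ 2 + 3 * Z + 6) / 60 + (M / 9) * (5 * Z ^ 2 - 16 * Z + 20)
    + (β / 2) * (Z - 1) ^ 2

/-!
For fixed `Z > 1` the value `P M β Z` is affine and increasing in `β`, so it vanishes for exactly
one `β`, called `vanishingBeta M Z`, and is positive exactly for larger `β`. As a function of `Z`,
this value increases strictly on `(1, Z*]` and decreases strictly on `[Z*, ∞)`, and `β*` is its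
maximum. The sign of its derivative, and that of `∂P/∂Z` at a zero of `P`, are both read off
`(Z - 1) ∂P/∂Z - 2 P`, which is independent of `β` and strictly increasing in `Z ≥ 1`.
-/

open Set

lemma first_zero_unique {α R : Type*} [LinearOrder α] [Preorder R] [Zero R] {f : α → R}
    {a x y : α} (hax : a ≤ x) (hay : a ≤ y) (hx : ∀ z, a ≤ z → z < x → 0 < f z) (hfx : f x = 0)
    (hy : ∀ z, a ≤ z → z < y → 0 < f z) (hfy : f y = 0) : x = y :=
  le_antisymm (le_of_not_gt fun hyx => (hx y hay hyx).ne' hfy)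
    (le_of_not_gt fun hxy => (hy x hax hxy).ne' hfx)

/-- The `β`-independent combination `(Z - 1) ∂P/∂Z - 2 P`, whose zero locates the double zero of
`P(·; M, β*)`. It is written out as a polynomial; `sub_one_mul_deriv_P` identifies it. -/
noncomputable def tangency (M Z : ℝ) : ℝ :=
  (Z - 1) ^ 3 * (3 * Z ^ 2 + 4 * Z + 3) / 60 + 2 * M / 3 * (Z - 4)

/-- The parameter `β` for which `P(·; M, β)` vanishes at `Z`. At `Z = 1`, where no such `β` exists
unless `M = 0`, the division gives the meaningless value `0`. -/
noncomputable def vanishingBeta (M Z : ℝ) : ℝ :=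
  -2 * P M 0 Z / (Z - 1) ^ 2

section Parameters

variable {M β Z : ℝ}

lemma P_one (M β : ℝ) : P M β 1 = M := by
  unfold P
  ring

lemma P_eq_sq_mul_sub_vanishingBeta (M β : ℝ) (hZ : Z ≠ 1) :
    P M β Z = (Z - 1) ^ 2 / 2 * (β - vanishingBeta M Z) := by
  have hZ' : Z - 1 ≠ 0 := sub_ne_zero.2 hZ
  unfold vanishingBeta P
  field

lemma P_pos_iff (hZ : Z ≠ 1) : 0 < P M β Z ↔ vanishingBeta M Z < β := by
  have hscale : 0 < (Z - 1) ^ 2 / 2 := half_pos (sq_pos_of_ne_zero (sub_ne_zero.2 hZ))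
  rw [P_eq_sq_mul_sub_vanishingBeta M β hZ, mul_pos_iff_of_pos_left hscale, sub_pos]

lemma P_eq_zero_iff (hZ : Z ≠ 1) : P M β Z = 0 ↔ vanishingBeta M Z = β := by
  have hscale : 0 < (Z - 1) ^ 2 / 2 := half_pos (sq_pos_of_ne_zero (sub_ne_zero.2 hZ))
  rw [P_eq_sq_mul_sub_vanishingBeta M β hZ, mul_eq_zero_iff_left hscale.ne', sub_eq_zero, eq_comm]

lemma P_neg_iff (hZ : Z ≠ 1) : P M β Z < 0 ↔ β < vanishingBeta M Z := by
  rw [← not_le, le_iff_lt_or_eq, P_pos_iff hZ, eq_comm, P_eq_zero_iff hZ, ← le_iff_lt_or_eq, not_le]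

lemma P_pos_of_vanishingBeta_lt (hM : 0 < M) (hZ : 1 ≤ Z)
    (hβ : 1 < Z → vanishingBeta M Z < β) : 0 < P M β Z := by
  rcases hZ.eq_or_lt with rfl | hZ
  · rwa [P_one]
  · exact (P_pos_iff hZ.ne').2 (hβ hZ)

lemma vanishingBeta_neg (hM : 0 ≤ M) (hZ : 1 < Z) : vanishingBeta M Z < 0 := by
  rw [← P_pos_iff hZ.ne']
  have : 0 < Z - 1 := sub_pos.2 hZ
  have hquadratic : 0 < 5 * Z ^ 2 - 16 * Z + 20 := by nlinarith [sq_nonneg (5 * Z - 8)]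
  unfold P
  positivity

lemma hasDerivAt_P (M β Z : ℝ) :
    HasDerivAt (P M β)
      ((Z - 1) ^ 2 * (Z ^ 2 + 2 * Z + 3) / 12 + M / 9 * (10 * Z - 16) + β * (Z - 1)) Z := by
  have hid := hasDerivAt_id Z
  have hsub := hid.sub_const 1
  have hquintic := ((hsub.pow 3).mul (((hid.pow 2).add (hid.const_mul 3)).add_const 6)).div_const 60
  have hquadratic :=
    ((((hid.pow 2).const_mul 5).sub (hid.const_mul 16)).add_const 20).const_mul (M / 9)
  refine ((hquintic.add hquadratic).add ((hsub.pow 2).const_mul (β / 2))).congr_deriv ?_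
  simp only [id, Pi.add_apply, Pi.pow_apply]
  ring

lemma continuous_P (M β : ℝ) : Continuous (P M β) :=
  continuous_iff_continuousAt.2 fun Z => (hasDerivAt_P M β Z).continuousAt

lemma sub_one_mul_deriv_P (M β Z : ℝ) :
    (Z - 1) * deriv (P M β) Z = 2 * P M β Z + tangency M Z := by
  rw [(hasDerivAt_P M β Z).deriv]
  unfold P tangency
  ring

lemma deriv_P_eq_tangency_div (hZ : Z ≠ 1) (hzero : P M β Z = 0) :
    deriv (P M β) Z = tangency M Z / (Z - 1) := by
  have hmul := sub_one_mul_deriv_P M β Z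
  rw [hzero, mul_zero, zero_add] at hmul
  exact eq_div_of_mul_eq (sub_ne_zero.2 hZ) (by rwa [mul_comm])

lemma hasDerivAt_vanishingBeta (M : ℝ) (hZ : Z ≠ 1) :
    HasDerivAt (vanishingBeta M) (-2 * tangency M Z / (Z - 1) ^ 3) Z := by
  have hZ' : Z - 1 ≠ 0 := sub_ne_zero.2 hZ
  have hP : HasDerivAt (P M 0) (deriv (P M 0) Z) Z :=
    (hasDerivAt_P M 0 Z).differentiableAt.hasDerivAt
  have hsq := ((hasDerivAt_id Z).sub_const 1).pow 2
  refine ((hP.const_mul (-2)).div hsq (pow_ne_zero 2 hZ')).congr_deriv ?_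
  rw [eq_sub_of_add_eq' (sub_one_mul_deriv_P M 0 Z).symm]
  simp only [id, Pi.pow_apply]
  field

lemma strictMonoOn_tangency (hM : 0 ≤ M) : StrictMonoOn (tangency M) (Ici 1) := by
  intro a (ha : 1 ≤ a) b _ hab
  have : 0 ≤ a - 1 := sub_nonneg.2 ha
  have hquintic :
      (a - 1) ^ 3 * (3 * a ^ 2 + 4 * a + 3) < (b - 1) ^ 3 * (3 * b ^ 2 + 4 * b + 3) := by
    gcongr
  have hlinear : 2 * M / 3 * (a - 4) ≤ 2 * M / 3 * (b - 4) := by gcongr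
  unfold tangency
  linarith

lemma exists_tangency_eq_zero (hM : 0 < M) : ∃ Z, 1 < Z ∧ tangency M Z = 0 := by
  have hcont : ContinuousOn (tangency M) (Icc 1 4) := by unfold tangency; fun_prop
  have hone : tangency M 1 < 0 := by unfold tangency; linarith
  have hfour : 0 < tangency M 4 := by unfold tangency; norm_num
  obtain ⟨Z, hZ, hzero⟩ := intermediate_value_Ioo (by norm_num) hcont ⟨hone, hfour⟩
  exact ⟨Z, hZ.1, hzero⟩

end Parameters

section CriticalPoint

variable {M β Zstar : ℝ}

lemma tangency_neg_of_lt {Z : ℝ} (hM : 0 ≤ M) (hstar : tangency M Zstar = 0) (hZ : 1 < Z)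
    (hlt : Z < Zstar) : tangency M Z < 0 :=
  hstar ▸ strictMonoOn_tangency hM hZ.le (hZ.trans hlt).le hlt

lemma strictMonoOn_vanishingBeta (hM : 0 ≤ M) (hstar : tangency M Zstar = 0) :
    StrictMonoOn (vanishingBeta M) (Ioc 1 Zstar) := by
  refine strictMonoOn_of_deriv_pos (convex_Ioc 1 Zstar)
    (fun Z hZ => (hasDerivAt_vanishingBeta M hZ.1.ne').continuousAt.continuousWithinAt) ?_
  intro Z hZ
  rw [interior_Ioc] at hZ
  have htangency : tangency M Z < 0 := tangency_neg_of_lt hM hstar hZ.1 hZ.2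
  rw [(hasDerivAt_vanishingBeta M hZ.1.ne').deriv]
  exact div_pos (by linarith) (pow_pos (sub_pos.2 hZ.1) 3)

lemma strictAntiOn_vanishingBeta (hM : 0 ≤ M) (hone : 1 < Zstar) (hstar : tangency M Zstar = 0) :
    StrictAntiOn (vanishingBeta M) (Ici Zstar) := by
  refine strictAntiOn_of_deriv_neg (convex_Ici Zstar)
    (fun Z hZ =>
      (hasDerivAt_vanishingBeta M (hone.trans_le hZ).ne').continuousAt.continuousWithinAt) ?_
  intro Z hZ
  rw [interior_Ici] at hZ
  have hZ1 : 1 < Z := hone.trans hZ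
  have htangency : 0 < tangency M Z := hstar ▸ strictMonoOn_tangency hM hone.le hZ1.le hZ
  rw [(hasDerivAt_vanishingBeta M hZ1.ne').deriv]
  exact div_neg_of_neg_of_pos (by linarith) (pow_pos (sub_pos.2 hZ1) 3)

lemma vanishingBeta_lt_of_ne {Z : ℝ} (hM : 0 ≤ M) (hone : 1 < Zstar)
    (hstar : tangency M Zstar = 0) (hZ : 1 < Z) (hne : Z ≠ Zstar) :
    vanishingBeta M Z < vanishingBeta M Zstar := by
  rcases hne.lt_or_gt with hlt | hgt
  · exact strictMonoOn_vanishingBeta hM hstar ⟨hZ, hlt.le⟩ ⟨hone, le_rfl⟩ hlt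
  · exact strictAntiOn_vanishingBeta hM hone hstar self_mem_Ici hgt.le hgt

lemma vanishingBeta_le {Z : ℝ} (hM : 0 ≤ M) (hone : 1 < Zstar)
    (hstar : tangency M Zstar = 0) (hZ : 1 < Z) :
    vanishingBeta M Z ≤ vanishingBeta M Zstar := by
  obtain rfl | hne := eq_or_ne Z Zstar
  · exact le_rfl
  · exact (vanishingBeta_lt_of_ne hM hone hstar hZ hne).le

lemma exists_first_zero_P (hM : 0 < M) (hone : 1 < Zstar) (hstar : tangency M Zstar = 0)
    (hβ : β < vanishingBeta M Zstar) :
    ∃ Zr ∈ Ioo 1 Zstar, (∀ Z, 1 ≤ Z → Z < Zr → 0 < P M β Z) ∧ P M β Zr = 0 := by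
  have hstart : 0 < P M β 1 := by rwa [P_one]
  have hend : P M β Zstar < 0 := (P_neg_iff hone.ne').2 hβ
  obtain ⟨Zr, hr, hzero⟩ :=
    intermediate_value_Ioo' hone.le (continuous_P M β).continuousOn ⟨hend, hstart⟩
  refine ⟨Zr, hr, fun Z hZ hlt => P_pos_of_vanishingBeta_lt hM hZ fun hZ1 => ?_, hzero⟩
  calc vanishingBeta M Z < vanishingBeta M Zr :=
        strictMonoOn_vanishingBeta hM.le hstar ⟨hZ1, (hlt.trans hr.2).le⟩ ⟨hr.1, hr.2.le⟩ hlt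
    _ = β := (P_eq_zero_iff hr.1.ne').1 hzero

end CriticalPoint

/-- for every `M > 0` there exists `β*(M) < 0` such that `P(·; M, β)` is
positive on `[1, ∞)` for `β > β*(M)`, has a unique simple zero (with the stated properties)
for `β < β*(M)`, and has a double zero at some `Z*(M) > 1` for `β = β*(M)`. -/
theorem exists_critical_beta (M : ℝ) (hM : 0 < M) :
    ∃ βstar : ℝ, βstar < 0 ∧
      (∀ β : ℝ, βstar < β → ∀ Z : ℝ, 1 ≤ Z → 0 < P M β Z) ∧
      (∀ β : ℝ, β < βstar → ∃! Zr : ℝ, 1 < Zr ∧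
        (∀ Z : ℝ, 1 ≤ Z → Z < Zr → 0 < P M β Z) ∧
        P M β Zr = 0 ∧ deriv (P M β) Zr < 0) ∧
      (∃ Zstar : ℝ, 1 < Zstar ∧ P M βstar Zstar = 0 ∧ deriv (P M βstar) Zstar = 0 ∧
        ∀ Z : ℝ, 1 ≤ Z → Z ≠ Zstar → 0 < P M βstar Z) := by
  obtain ⟨Zstar, hone, hstar⟩ := exists_tangency_eq_zero hM
  have hdouble : P M (vanishingBeta M Zstar) Zstar = 0 := (P_eq_zero_iff hone.ne').2 rfl
  refine ⟨vanishingBeta M Zstar, vanishingBeta_neg hM.le hone, ?_, ?_, Zstar, hone, hdouble,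
    ?_, ?_⟩
  · intro β hβ Z hZ
    exact P_pos_of_vanishingBeta_lt hM hZ fun hZ1 =>
      (vanishingBeta_le hM.le hone hstar hZ1).trans_lt hβ
  · intro β hβ
    obtain ⟨Zr, hr, hpos, hzero⟩ := exists_first_zero_P hM hone hstar hβ
    have hderiv : deriv (P M β) Zr < 0 := by
      rw [deriv_P_eq_tangency_div hr.1.ne' hzero]
      exact div_neg_of_neg_of_pos (tangency_neg_of_lt hM.le hstar hr.1 hr.2) (sub_pos.2 hr.1)
    refine ⟨Zr, ⟨hr.1, hpos, hzero, hderiv⟩, ?_⟩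
    rintro Y ⟨hY, hYpos, hYzero, -⟩
    exact first_zero_unique hY.le hr.1.le hYpos hYzero hpos hzero
  · rw [deriv_P_eq_tangency_div hone.ne' hdouble, hstar, zero_div]
  · intro Z hZ hne
    exact P_pos_of_vanishingBeta_lt hM hZ fun hZ1 =>
      vanishingBeta_lt_of_ne hM.le hone hstar hZ1 hne
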